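/- arXiv:1304.2328 — 2 statements merged into one kernel-verified Lean document; each statement's English description precedes it below -/
import Mathlib

section
/- Let v ∈ ℂ^m ⊗ ℂ^n be a unit vector and fix 1 ≤ k ≤ min(m,n). Then SR(v) ≤ k if and only if ‖L(|v⟩⟨v|)‖_{(k²,2)}° ≤ 1. -/
open scoped Kronecker ComplexOrder
open Matrix

namespace Ent

variable {ι κ : Type*} [Fintype ι] [Fintype κ]

/-- Inner product ⟨v,w⟩ = Σᵢ conj(v i) * (w i) (conjugate-linear in the first argument). -/
noncomputable def vinner (v w : ι → ℂ) : ℂ := dotProduct (star v) w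

/-- An elementary (product) tensor a ⊗ b in ℂ^ι ⊗ ℂ^κ. -/
def prodVec (a : ι → ℂ) (b : κ → ℂ) : ι × κ → ℂ := fun p => a p.1 * b p.2

/-- `v` has Schmidt rank at most `k`. -/
def SchmidtRankLE (k : ℕ) (v : ι × κ → ℂ) : Prop :=
  ∃ (a : Fin k → ι → ℂ) (b : Fin k → κ → ℂ), v = ∑ i, prodVec (a i) (b i)

/-- The rank-one operator |v⟩⟨w|. -/
noncomputable def ketBra (v : ι → ℂ) (w : κ → ℂ) : Matrix ι κ ℂ :=
  Matrix.vecMulVec v (star w)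

/-- A finite family of vectors is orthonormal. -/
def Orthonormal' {N : Type*} [DecidableEq N] (v : N → ι → ℂ) : Prop :=
  ∀ i j, vinner (v i) (v j) = if i = j then 1 else 0

/-- The S(k)-norm of `X ∈ M_ι ⊗ M_κ`. -/
noncomputable def SkNorm (k : ℕ) (X : Matrix (ι × κ) (ι × κ) ℂ) : ℝ :=
  sSup { r | ∃ v w : ι × κ → ℂ, vinner v v = 1 ∧ vinner w w = 1 ∧
    SchmidtRankLE k v ∧ SchmidtRankLE k w ∧
    r = ‖vinner v (X.mulVec w)‖ }

/-- The product numerical radius r_k^⊗. -/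
noncomputable def prodRad (k : ℕ) (Y : Matrix (ι × κ) (ι × κ) ℂ) : ℝ :=
  sSup { r | ∃ v : ι × κ → ℂ, vinner v v = 1 ∧ SchmidtRankLE k v ∧
    r = ‖vinner v (Y.mulVec v)‖ }

/-- The norm ‖·‖_{γ,k}. -/
noncomputable def gammaNorm (k : ℕ) (X : Matrix (ι × κ) (ι × κ) ℂ) : ℝ :=
  sInf { r | ∃ (N : ℕ) (c : Fin N → ℂ) (v w : Fin N → (ι × κ → ℂ)),
    (∀ i, vinner (v i) (v i) = 1 ∧ vinner (w i) (w i) = 1 ∧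
      SchmidtRankLE k (v i) ∧ SchmidtRankLE k (w i)) ∧
    X = ∑ i, c i • ketBra (v i) (w i) ∧
    r = ∑ i, ‖c i‖ }

/-- `ρ` is a density matrix. -/
def IsDensity (ρ : Matrix ι ι ℂ) : Prop := ρ.PosSemidef ∧ ρ.trace = 1

/-- `ρ` has Schmidt number at most `k`: it is a convex combination of projections onto
unit vectors of Schmidt rank at most `k`. -/
def SchmidtNumLE (k : ℕ) (ρ : Matrix (ι × κ) (ι × κ) ℂ) : Prop :=
  ∃ (N : ℕ) (p : Fin N → ℝ) (v : Fin N → (ι × κ → ℂ)),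
    (∀ i, 0 ≤ p i ∧ vinner (v i) (v i) = 1 ∧ SchmidtRankLE k (v i)) ∧
    (∑ i, p i) = 1 ∧ ρ = ∑ i, p i • ketBra (v i) (v i)

/-- The robustness norm R_k on Hermitian operators. -/
noncomputable def Rk (k : ℕ) (Y : Matrix (ι × κ) (ι × κ) ℂ) : ℝ :=
  sInf { r | ∃ (c₁ c₂ : ℝ) (ρ₁ ρ₂ : Matrix (ι × κ) (ι × κ) ℂ),
    0 ≤ c₁ ∧ 0 ≤ c₂ ∧ IsDensity ρ₁ ∧ IsDensity ρ₂ ∧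
    SchmidtNumLE k ρ₁ ∧ SchmidtNumLE k ρ₂ ∧
    Y = c₁ • ρ₁ - c₂ • ρ₂ ∧ r = c₁ + c₂ }

/-- `Y` is k-block positive: ⟨v|Y|v⟩ ≥ 0 for every unit vector of Schmidt rank at most `k`. -/
def KBlockPos (k : ℕ) (Y : Matrix (ι × κ) (ι × κ) ℂ) : Prop :=
  ∀ v : ι × κ → ℂ, vinner v v = 1 → SchmidtRankLE k v →
    0 ≤ (vinner v (Y.mulVec v)).re

/-- Dual of a norm on matrices, w.r.t. the Hilbert–Schmidt inner product ⟨W,X⟩ = Tr(Wᴴ X). -/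
noncomputable def dualNormM (f : Matrix ι κ ℂ → ℝ) (X : Matrix ι κ ℂ) : ℝ :=
  sSup { r | ∃ W : Matrix ι κ ℂ, f W ≤ 1 ∧ r = ‖(Wᴴ * X).trace‖ }

/-- Dual of a norm, computed in the real Hilbert space of Hermitian matrices with the
Hilbert–Schmidt inner product ⟨W,Y⟩ = Tr(WY). -/
noncomputable def dualNormHerm (f : Matrix ι ι ℂ → ℝ) (Y : Matrix ι ι ℂ) : ℝ :=
  sSup { r | ∃ W : Matrix ι ι ℂ, W.IsHermitian ∧ f W ≤ 1 ∧ r = |((W * Y).trace).re| }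

/-- The Frobenius norm of a matrix. -/
noncomputable def frobNorm (X : Matrix ι κ ℂ) : ℝ :=
  Real.sqrt (∑ i, ∑ j, Complex.normSq (X i j))

/-- The (k,2)-norm: ‖X‖_{(k,2)} = sup { |Tr(XY)| : rank Y ≤ k, ‖Y‖_F ≤ 1 }. -/
noncomputable def kNorm (k : ℕ) (X : Matrix ι κ ℂ) : ℝ :=
  sSup { r | ∃ Y : Matrix κ ι ℂ, Y.rank ≤ k ∧ frobNorm Y ≤ 1 ∧
    r = ‖(X * Y).trace‖ }

/-- The trace norm: the sum of the singular values, i.e. of the square roots of the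
eigenvalues of Xᴴ X. -/
noncomputable def traceNorm [DecidableEq κ] (X : Matrix ι κ ℂ) : ℝ :=
  ∑ i, Real.sqrt ((Matrix.isHermitian_conjTranspose_mul_self X).eigenvalues i)

/-- The s(k) vector norm: sup of |⟨u,w⟩| over unit vectors u of Schmidt rank at most k. -/
noncomputable def skVecNorm (k : ℕ) (w : ι × κ → ℂ) : ℝ :=
  sSup { r | ∃ u : ι × κ → ℂ, vinner u u = 1 ∧ SchmidtRankLE k u ∧
    r = ‖vinner u w‖ }

/-- Dual of a norm on vectors. -/
noncomputable def dualNormV (f : (ι × κ → ℂ) → ℝ) (v : ι × κ → ℂ) : ℝ :=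
  sSup { r | ∃ w : ι × κ → ℂ, f w ≤ 1 ∧ r = ‖vinner w v‖ }

/-- The realignment map, L(X)_{(i,k),(j,l)} = X_{(i,j),(k,l)}. -/
def realign {m n : ℕ} (X : Matrix (Fin m × Fin n) (Fin m × Fin n) ℂ) :
    Matrix (Fin m × Fin m) (Fin n × Fin n) ℂ :=
  fun p q => X (p.1, q.1) (p.2, q.2)

/-- The projective tensor norm on M_{m,n} ⊗ M_{m,n}. -/
noncomputable def projNorm {m n : ℕ} (Z : Matrix (Fin m × Fin m) (Fin n × Fin n) ℂ) : ℝ :=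
  sInf { r | ∃ (N : ℕ) (A B : Fin N → Matrix (Fin m) (Fin n) ℂ),
    Z = ∑ i, A i ⊗ₖ B i ∧ r = ∑ i, traceNorm (A i) * traceNorm (B i) }


section Helpers

theorem schmidt_of_rank {m n k : ℕ} (A : Matrix (Fin m) (Fin n) ℂ) (h : A.rank ≤ k) :
    ∃ (B : Matrix (Fin m) (Fin k) ℂ) (C : Matrix (Fin k) (Fin n) ℂ), A = B * C := by
  have h1 : Module.finrank ℂ (LinearMap.range A.mulVecLin) ≤ Module.finrank ℂ (Fin k → ℂ) := by
    simpa [Matrix.rank] using h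
  obtain ⟨f, hf⟩ := finrank_le_iff_exists_linearMap.mp h1
  obtain ⟨g, hg⟩ := LinearMap.exists_leftInverse_of_injective f (LinearMap.ker_eq_bot.mpr hf)
  refine ⟨LinearMap.toMatrix' ((LinearMap.range A.mulVecLin).subtype ∘ₗ g),
    LinearMap.toMatrix' (f ∘ₗ A.mulVecLin.rangeRestrict), ?_⟩
  rw [← LinearMap.toMatrix'_comp]
  apply Matrix.toLin'.injective
  rw [Matrix.toLin'_toMatrix']
  ext1 x
  have h2 : ∀ y, g (f y) = y := fun y => by
    have := LinearMap.congr_fun hg y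
    simpa using this
  ext i
  simp [h2]

theorem exists_inverse_of_rank {m n r : ℕ} (A : Matrix (Fin m) (Fin n) ℂ) (h : r ≤ A.rank) :
    ∃ (P : Matrix (Fin r) (Fin m) ℂ) (Q : Matrix (Fin n) (Fin r) ℂ), P * A * Q = 1 := by
  have h1 : Module.finrank ℂ (Fin r → ℂ) ≤ Module.finrank ℂ (LinearMap.range A.mulVecLin) := by
    simpa [Matrix.rank] using h
  obtain ⟨f, hf⟩ := finrank_le_iff_exists_linearMap.mp h1
  obtain ⟨s, hs⟩ := LinearMap.exists_rightInverse_of_surjective A.mulVecLin.rangeRestrict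
    (LinearMap.range_rangeRestrict _)
  obtain ⟨g, hg⟩ := LinearMap.exists_leftInverse_of_injective
    ((LinearMap.range A.mulVecLin).subtype ∘ₗ f)
    (LinearMap.ker_eq_bot.mpr (Subtype.val_injective.comp hf))
  refine ⟨LinearMap.toMatrix' g, LinearMap.toMatrix' (s ∘ₗ f), ?_⟩
  apply Matrix.toLin'.injective
  rw [Matrix.toLin'_mul, Matrix.toLin'_mul, Matrix.toLin'_toMatrix', Matrix.toLin'_toMatrix',
    Matrix.toLin'_one, ← hg]
  refine LinearMap.ext fun x => ?_
  have h2 := congrArg Subtype.val (LinearMap.congr_fun hs (f x))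
  simp only [LinearMap.comp_apply, LinearMap.id_apply, LinearMap.codRestrict_apply,
    LinearMap.rangeRestrict, Matrix.mulVecLin_apply] at h2
  simp [h2]

theorem realign_eq {m n : ℕ} (v : Fin m × Fin n → ℂ) (A : Matrix (Fin m) (Fin n) ℂ)
    (hA : ∀ i j, A i j = v (i, j)) :
    realign (ketBra v v) = A ⊗ₖ (A.map (starRingEnd ℂ)) := by
  ext p q
  simp [realign, ketBra, Matrix.vecMulVec_apply, Matrix.kroneckerMap_apply, hA]

theorem rank_kron_le {m n k : ℕ} (A : Matrix (Fin m) (Fin n) ℂ)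
    (B : Matrix (Fin m) (Fin k) ℂ) (C : Matrix (Fin k) (Fin n) ℂ) (h : A = B * C) :
    (A ⊗ₖ (A.map (starRingEnd ℂ))).rank ≤ k ^ 2 := by
  rw [h, Matrix.map_mul, Matrix.mul_kronecker_mul]
  refine (Matrix.rank_mul_le_left _ _).trans ((Matrix.rank_le_card_width _).trans ?_)
  simp [sq]

theorem lt_rank_kron {m n k : ℕ} (A : Matrix (Fin m) (Fin n) ℂ) (h : k < A.rank) :
    k ^ 2 < (A ⊗ₖ (A.map (starRingEnd ℂ))).rank := by
  obtain ⟨P, Q, hPQ⟩ := exists_inverse_of_rank A h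
  have h1 : (P ⊗ₖ P.map (starRingEnd ℂ)) * (A ⊗ₖ (A.map (starRingEnd ℂ))) *
      (Q ⊗ₖ Q.map (starRingEnd ℂ)) = 1 := by
    rw [← Matrix.mul_kronecker_mul, ← Matrix.mul_kronecker_mul, ← Matrix.map_mul,
      ← Matrix.map_mul, hPQ]
    simp
  have h2 := (Matrix.rank_mul_le_left ((P ⊗ₖ P.map (starRingEnd ℂ)) *
    (A ⊗ₖ (A.map (starRingEnd ℂ)))) (Q ⊗ₖ Q.map (starRingEnd ℂ))).trans
      (Matrix.rank_mul_le_right _ _)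
  rw [h1, Matrix.rank_one] at h2
  simp only [Fintype.card_prod, Fintype.card_fin] at h2
  nlinarith

/-- Vectorization. -/
noncomputable def vecE (Y : Matrix ι κ ℂ) : EuclideanSpace ℂ (ι × κ) :=
  WithLp.toLp 2 (fun p => Y p.1 p.2)

theorem norm_vecE (Y : Matrix ι κ ℂ) : ‖vecE Y‖ = frobNorm Y := by
  rw [EuclideanSpace.norm_eq, frobNorm, Fintype.sum_prod_type]
  simp [vecE, Complex.normSq_eq_norm_sq]

theorem trace_eq_inner (X : Matrix ι κ ℂ) (Y : Matrix κ ι ℂ) :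
    (X * Y).trace = inner ℂ (vecE Xᴴ) (vecE Y) := by
  rw [PiLp.inner_apply, Fintype.sum_prod_type, Finset.sum_comm]
  simp [vecE, Matrix.trace, Matrix.mul_apply, mul_comm]

theorem frobNorm_conjTranspose (X : Matrix ι κ ℂ) : frobNorm Xᴴ = frobNorm X := by
  rw [frobNorm, frobNorm, Finset.sum_comm]
  simp [Complex.normSq_conj]

theorem norm_trace_le (X : Matrix ι κ ℂ) (Y : Matrix κ ι ℂ) :
    ‖(X * Y).trace‖ ≤ frobNorm X * frobNorm Y := by
  rw [trace_eq_inner, ← frobNorm_conjTranspose X, ← norm_vecE, ← norm_vecE]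
  exact norm_inner_le_norm _ _

theorem le_kNorm (k : ℕ) (X : Matrix ι κ ℂ) (Y : Matrix κ ι ℂ) (hr : Y.rank ≤ k)
    (hY : frobNorm Y ≤ 1) : ‖(X * Y).trace‖ ≤ kNorm k X := by
  refine le_csSup ⟨frobNorm X, ?_⟩ ⟨Y, hr, hY, rfl⟩
  rintro _ ⟨Y, -, hY, rfl⟩
  exact (norm_trace_le X Y).trans (mul_le_of_le_one_right (Real.sqrt_nonneg _) hY)

theorem entry_le_kNorm [DecidableEq ι] [DecidableEq κ] {k : ℕ} (hk : 1 ≤ k)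
    (X : Matrix ι κ ℂ) (i : ι) (j : κ) :
    ‖X i j‖ ≤ kNorm k X := by
  have h := le_kNorm k X (Matrix.single j i 1) ?_ ?_
  · simpa [Matrix.trace_mul_single] using h
  · rw [Matrix.single_eq_single_vecMulVec_single]
    exact (Matrix.rank_vecMulVec_le _ _).trans hk
  · rw [frobNorm]
    simp [Matrix.single_apply, apply_ite, ite_and]

theorem frobNorm_le_of_kNorm {k : ℕ} (hk : 1 ≤ k) (X : Matrix ι κ ℂ) (h : kNorm k X ≤ 1) :
    frobNorm X ≤ Real.sqrt (∑ _i : ι, ∑ _j : κ, 1) := by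
  classical
  refine Real.sqrt_le_sqrt (Finset.sum_le_sum fun i _ => Finset.sum_le_sum fun j _ => ?_)
  rw [Complex.normSq_eq_norm_sq]
  have := (entry_le_kNorm hk X i j).trans h
  exact pow_le_one₀ (norm_nonneg _) this

/-- Inverse of vectorization, as a linear map into continuous linear maps. -/
noncomputable def unvec [DecidableEq κ] : EuclideanSpace ℂ (ι × κ) →ₗ[ℂ]
    (EuclideanSpace ℂ κ →L[ℂ] EuclideanSpace ℂ ι) where
  toFun y := LinearMap.toContinuousLinearMap
    (Matrix.toLpLin 2 2 (Matrix.of fun i j => y (i, j)))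
  map_add' x y := by
    rw [← map_add, ← map_add]; rfl
  map_smul' c y := by
    rw [RingHom.id_apply, ← map_smul, ← map_smul]; rfl

theorem rank_unvec [DecidableEq κ] (Y : Matrix ι κ ℂ) :
    (unvec (vecE Y) : EuclideanSpace ℂ κ →ₗ[ℂ] EuclideanSpace ℂ ι).rank = Y.rank := by
  classical
  have h : (unvec (vecE Y) : EuclideanSpace ℂ κ →ₗ[ℂ] EuclideanSpace ℂ ι)
      = Matrix.toLpLin 2 2 Y := rfl
  rw [h, Matrix.rank_eq_finrank_range_toLin Y (PiLp.basisFun 2 ℂ ι) (PiLp.basisFun 2 ℂ κ),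
    ← Matrix.toLpLin_eq_toLin, LinearMap.rank, Module.finrank_eq_rank]

theorem exists_gap {r : ℕ} (Z : Matrix ι κ ℂ) (hZ : frobNorm Z = 1) (hr : r < Z.rank) :
    ∃ t : ℝ, 0 < t ∧ t < 1 ∧
      ∀ Y : Matrix κ ι ℂ, Y.rank ≤ r → frobNorm Y ≤ 1 → ‖(Z * Y).trace‖ ≤ t := by
  classical
  have ho : IsOpen {y : EuclideanSpace ℂ (κ × ι) |
      ((r + 1 : ℕ) : Cardinal) ≤ (unvec y : EuclideanSpace ℂ ι →ₗ[ℂ] EuclideanSpace ℂ κ).rank} :=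
    (isOpen_setOfPred_nat_le_rank (r + 1)).preimage
      (LinearMap.continuous_of_finiteDimensional (unvec (ι := κ) (κ := ι)))
  have hmem : vecE Zᴴ ∈ {y : EuclideanSpace ℂ (κ × ι) |
      ((r + 1 : ℕ) : Cardinal) ≤
        (unvec y : EuclideanSpace ℂ ι →ₗ[ℂ] EuclideanSpace ℂ κ).rank} := by
    rw [Set.mem_setOf_eq, rank_unvec, Matrix.rank_conjTranspose]
    exact_mod_cast hr
  obtain ⟨ε, hε, hball⟩ := Metric.isOpen_iff.mp ho _ hmem
  have hm1 : min (ε ^ 2) 1 ≤ 1 := min_le_right _ _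
  have hm2 : min (ε ^ 2) 1 ≤ ε ^ 2 := min_le_left _ _
  have hm3 : 0 < min (ε ^ 2) 1 := lt_min (by positivity) one_pos
  refine ⟨1 - min (ε ^ 2) 1 / 4, by linarith, by linarith, fun Y hY hY1 => ?_⟩
  by_contra! hlt
  set τ := (Z * Y).trace with hτ
  have hτ0 : τ ≠ 0 := by
    intro h0
    rw [h0, norm_zero] at hlt
    linarith
  have hn0 : ‖τ‖ ≠ 0 := norm_ne_zero_iff.mpr hτ0
  obtain ⟨c, hc, hcτ⟩ : ∃ c : ℂ, ‖c‖ = 1 ∧ c * τ = ‖τ‖ := by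
    refine ⟨‖τ‖ / τ, by simp [hn0], by field_simp⟩
  have hsm : vecE (c • Y) = c • vecE Y := rfl
  have hin : inner ℂ (vecE Zᴴ) (c • vecE Y) = (‖τ‖ : ℂ) := by
    rw [inner_smul_right, ← trace_eq_inner, ← hcτ]
  have hdist : ‖c • vecE Y - vecE Zᴴ‖ < ε := by
    have h1 := @norm_sub_sq ℂ _ _ _ _ (vecE Zᴴ) (c • vecE Y)
    rw [hin, norm_smul, hc, norm_vecE, norm_vecE, frobNorm_conjTranspose, hZ] at h1
    simp only [RCLike.re_to_complex, Complex.ofReal_re] at h1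
    have h0 : 0 ≤ frobNorm Y := Real.sqrt_nonneg _
    rw [norm_sub_rev]
    refine lt_of_pow_lt_pow_left₀ 2 hε.le ?_
    nlinarith
  have h2 := hball (mem_ball_iff_norm.mpr hdist)
  rw [Set.mem_setOf_eq, ← hsm, rank_unvec] at h2
  have h3 : r + 1 ≤ (c • Y).rank := by exact_mod_cast h2
  have h4 : (c • Y).rank ≤ Y.rank := by
    have : c • Y = Y * (c • (1 : Matrix ι ι ℂ)) := by simp
    rw [this]
    exact Matrix.rank_mul_le_left _ _
  omega

theorem trace_self (Z : Matrix ι κ ℂ) (hZ : frobNorm Z = 1) : (Zᴴ * Z).trace = 1 := by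
  rw [trace_eq_inner, Matrix.conjTranspose_conjTranspose, inner_self_eq_norm_sq_to_K, norm_vecE, hZ]
  simp

theorem frobNorm_realign {m n : ℕ} (v : Fin m × Fin n → ℂ) (hv : vinner v v = 1) :
    frobNorm (realign (ketBra v v)) = 1 := by
  have h1 : ∑ i, ∑ j, Complex.normSq (v (i, j)) = 1 := by
    rw [← Fintype.sum_prod_type' (f := fun i j => Complex.normSq (v (i, j)))]
    have : ((∑ x : Fin m × Fin n, Complex.normSq (v x) : ℝ) : ℂ) = 1 := by
      rw [← hv, vinner, dotProduct]
      push_cast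
      simp [Complex.normSq_eq_conj_mul_self]
    exact_mod_cast this
  rw [frobNorm, Real.sqrt_eq_one, Fintype.sum_prod_type]
  simp only [Fintype.sum_prod_type]
  simp only [realign, ketBra, Matrix.vecMulVec_apply, Complex.normSq_mul, Pi.star_apply,
    RCLike.star_def, Complex.normSq_conj, ← Finset.mul_sum, ← Finset.sum_mul]
  calc _ = (∑ i, ∑ j, Complex.normSq (v (i, j))) * (∑ i, ∑ j, Complex.normSq (v (i, j))) := by
        simp only [Finset.sum_mul, Finset.mul_sum]
        
    _ = 1 := by rw [h1, one_mul]

end Helpers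

/-- for a unit vector `v`, `SR(v) ≤ k` if and only if
`‖L(|v⟩⟨v|)‖_{(k²,2)}° ≤ 1`. -/
theorem schmidtRank_le_iff_dual_k2_realign {m n k : ℕ} (hk1 : 1 ≤ k) (hk : k ≤ min m n)
    (v : Fin m × Fin n → ℂ) (hv : vinner v v = 1) :
    SchmidtRankLE k v ↔ dualNormM (kNorm (k ^ 2)) (realign (ketBra v v)) ≤ 1 := by
  have hZ := frobNorm_realign v hv
  have hZe := realign_eq v (Matrix.of fun i j => v (i, j)) (fun _ _ => rfl)
  set A : Matrix (Fin m) (Fin n) ℂ := Matrix.of fun i j => v (i, j) with hA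
  constructor
  · rintro ⟨a, b, hab⟩
    have hf : A = (Matrix.of fun i l => a l i) * (Matrix.of fun l j => b l j) := by
      ext i j
      rw [hA, Matrix.of_apply, hab]
      simp [prodVec, Matrix.mul_apply]
    have hr := rank_kron_le A _ _ hf
    rw [← hZe] at hr
    refine Real.sSup_le ?_ zero_le_one
    rintro _ ⟨W, hW, rfl⟩
    have h1 := le_kNorm (k ^ 2) W (realign (ketBra v v))ᴴ
      (by rwa [Matrix.rank_conjTranspose]) (by rw [frobNorm_conjTranspose, hZ])
    have h2 : (Wᴴ * realign (ketBra v v)).trace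
        = star (W * (realign (ketBra v v))ᴴ).trace := by
      rw [← Matrix.trace_conjTranspose, Matrix.conjTranspose_mul,
        Matrix.conjTranspose_conjTranspose, Matrix.trace_mul_comm]
    rw [h2, norm_star]
    exact h1.trans hW
  · intro hd
    have hrank : A.rank ≤ k := by
      by_contra! hlt
      have hr := lt_rank_kron A hlt
      rw [← hZe] at hr
      obtain ⟨t, ht0, ht1, ht⟩ := exists_gap _ hZ hr
      have hle : ‖((((t⁻¹ : ℝ) : ℂ) • realign (ketBra v v))ᴴ * realign (ketBra v v)).trace‖ ≤
          dualNormM (kNorm (k ^ 2)) (realign (ketBra v v)) := by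
        refine le_csSup ⟨Real.sqrt (∑ _i : Fin m × Fin m, ∑ _j : Fin n × Fin n, 1), ?_⟩
          ⟨_, ?_, rfl⟩
        · rintro _ ⟨W, hW, rfl⟩
          refine (norm_trace_le _ _).trans ?_
          rw [hZ, mul_one, frobNorm_conjTranspose]
          exact frobNorm_le_of_kNorm (Nat.one_le_pow _ _ hk1) W hW
        · refine Real.sSup_le ?_ zero_le_one
          rintro _ ⟨Y, hY, hY1, rfl⟩
          rw [Matrix.smul_mul, Matrix.trace_smul, norm_smul, Complex.norm_real, Real.norm_eq_abs,
            abs_of_pos (inv_pos.mpr ht0)]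
          rw [inv_mul_le_iff₀ ht0, mul_one]
          exact ht Y hY hY1
      rw [Matrix.conjTranspose_smul, Matrix.smul_mul, Matrix.trace_smul, trace_self _ hZ, norm_smul,
        norm_star, Complex.norm_real, Real.norm_eq_abs, abs_of_pos (inv_pos.mpr ht0), norm_one,
        mul_one] at hle
      have := (one_lt_inv₀ ht0).mpr ht1
      linarith
    obtain ⟨B, C, hBC⟩ := schmidt_of_rank A hrank
    refine ⟨fun l i => B i l, fun l j => C l j, ?_⟩
    ext ⟨i, j⟩
    have h1 : A i j = v (i, j) := rfl
    rw [← h1, hBC]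
    simp [prodVec, Matrix.mul_apply]

end Ent
end

section
/- Let ρ ∈ M_m ⊗ M_n be a density matrix and fix 1 ≤ k ≤ min(m,n). If SN(ρ) ≤ k, then the trace norm of the realignment satisfies ‖L(ρ)‖_tr ≤ k. -/
open scoped Kronecker ComplexOrder
open Matrix

namespace Ent

variable {ι κ : Type*} [Fintype ι] [Fintype κ]

/-- Factorization of a vector of Schmidt rank at most `k`. -/
theorem exists_factor {m n k : ℕ} (v : Fin m × Fin n → ℂ) (hv : SchmidtRankLE k v) :
    ∃ (d : ℕ) (Q : Fin m → Fin d → ℂ) (R : Fin d → Fin n → ℂ), d ≤ k ∧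
      (∀ i j, v (i, j) = ∑ s, Q i s * R s j) ∧
      (∑ i, ∑ s, ‖Q i s‖ ^ 2 = d) ∧
      (∑ s, ∑ j, ‖R s j‖ ^ 2 ≤ ∑ i, ∑ j, ‖v (i, j)‖ ^ 2) := by
  obtain ⟨a, b, rfl⟩ := hv
  let a' : Fin k → EuclideanSpace ℂ (Fin m) := fun i => WithLp.toLp 2 (a i)
  let S : Submodule ℂ (EuclideanSpace ℂ (Fin m)) := Submodule.span ℂ (Set.range a')
  let e := stdOrthonormalBasis ℂ S
  have hS : Module.finrank ℂ S ≤ k := by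
    simpa [S, Set.finrank] using finrank_range_le_card (R := ℂ) a'
  have heo : Orthonormal ℂ (fun s => (e s : EuclideanSpace ℂ (Fin m))) :=
    e.orthonormal.comp_linearIsometry S.subtypeₗᵢ
  let x : Fin n → EuclideanSpace ℂ (Fin m) := fun j => ∑ l, b l j • a' l
  have hx : ∀ j, x j ∈ S := fun j =>
    Submodule.sum_mem _ fun l _ => Submodule.smul_mem _ _ (Submodule.subset_span ⟨l, rfl⟩)
  have hxv : ∀ i j, (∑ l, prodVec (a l) (b l)) (i, j) = x j i := by
    intro i j
    simp [x, a', prodVec, Finset.sum_apply, mul_comm]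
  refine ⟨Module.finrank ℂ S, fun i s => (e s : EuclideanSpace ℂ (Fin m)) i,
    fun s j => inner ℂ (e s : EuclideanSpace ℂ (Fin m)) (x j), hS, ?_, ?_, ?_⟩
  · intro i j
    rw [hxv]
    have h := congrArg (fun y : S => (y : EuclideanSpace ℂ (Fin m)) i) (e.sum_repr' ⟨x j, hx j⟩)
    simp only [Submodule.coe_sum, Submodule.coe_smul, Submodule.coe_inner] at h
    rw [← h]
    simp [mul_comm]
  · rw [Finset.sum_comm]
    have : ∀ s, ∑ i, ‖(e s : EuclideanSpace ℂ (Fin m)) i‖ ^ 2 = 1 := by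
      intro s
      rw [← EuclideanSpace.norm_sq_eq, heo.1 s]; norm_num
    simp [this]
  · simp only [hxv]
    rw [Finset.sum_comm]
    refine le_of_le_of_eq ?_ Finset.sum_comm
    refine Finset.sum_le_sum fun j _ => ?_
    rw [← EuclideanSpace.norm_sq_eq]
    exact heo.sum_inner_products_le (s := Finset.univ) (x j)

/-- The trace norm of a product is at most the product of Frobenius norms. -/
theorem traceNorm_mul_le {ι γ κ : Type*} [Fintype ι] [Fintype γ] [Fintype κ] [DecidableEq κ]
    (A : Matrix ι γ ℂ) (B : Matrix γ κ ℂ) (X : Matrix ι κ ℂ) (hX : X = A * B) :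
    traceNorm X ≤ Real.sqrt (∑ i, ∑ c, ‖A i c‖ ^ 2) * Real.sqrt (∑ c, ∑ j, ‖B c j‖ ^ 2) := by
  classical
  let hH := Matrix.isHermitian_conjTranspose_mul_self X
  let u := hH.eigenvectorBasis
  let lam := hH.eigenvalues
  let y : κ → EuclideanSpace ℂ ι := fun q => WithLp.toLp 2 (X *ᵥ (u q).ofLp)
  have hlam : ∀ q, 0 ≤ lam q := fun q =>
    (Matrix.posSemidef_conjTranspose_mul_self X).eigenvalues_nonneg q
  have hyy : ∀ p q, inner ℂ (y p) (y q) = if p = q then (lam q : ℂ) else 0 := by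
    intro p q
    have h1 : inner ℂ (y p) (y q) = star (u p).ofLp ⬝ᵥ ((Xᴴ * X) *ᵥ (u q).ofLp) := by
      simp only [y, EuclideanSpace.inner_eq_star_dotProduct]
      rw [dotProduct_comm, star_mulVec, ← dotProduct_mulVec, mulVec_mulVec]
    have h2 : (Xᴴ * X) *ᵥ (u q).ofLp = lam q • (u q).ofLp := hH.mulVec_eigenvectorBasis q
    have h3 := orthonormal_iff_ite.mp u.orthonormal p q
    rw [EuclideanSpace.inner_eq_star_dotProduct, dotProduct_comm] at h3
    rw [h1, h2, dotProduct_smul, h3]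
    split_ifs <;> simp
  let w : κ → EuclideanSpace ℂ ι := fun q => ((Real.sqrt (lam q) : ℂ))⁻¹ • y q
  let J : Finset κ := Finset.univ.filter fun q => lam q ≠ 0
  have hw : Orthonormal ℂ (fun q : J => w q) := by
    rw [orthonormal_iff_ite]
    rintro ⟨p, hp⟩ ⟨q, hq⟩
    have hq' : lam q ≠ 0 := by simpa [J] using hq
    simp only [w, inner_smul_left, inner_smul_right, hyy, Subtype.mk.injEq]
    split_ifs with h
    · subst h
      have hs : (Real.sqrt (lam p) : ℂ) ≠ 0 := by
        exact_mod_cast (Real.sqrt_ne_zero (hlam p)).mpr hq'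
      have hss : (lam p : ℂ) = Real.sqrt (lam p) * Real.sqrt (lam p) := by
        exact_mod_cast (Real.mul_self_sqrt (hlam p)).symm
      rw [map_inv₀, Complex.conj_ofReal]
      rw [hss]
      field_simp
    · simp
  let α : γ → EuclideanSpace ℂ ι := fun c => WithLp.toLp 2 (fun i => A i c)
  -- the vectors `Aᴴ w_q` and `B u_q`
  let f : κ → γ → ℂ := fun q c => inner ℂ (w q) (α c)
  let g : κ → γ → ℂ := fun q c => (B *ᵥ (u q).ofLp) c
  have hy : ∀ q, y q = ∑ c, g q c • α c := by
    intro q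
    ext i
    simp only [y, hX, ← mulVec_mulVec, WithLp.ofLp_sum, Finset.sum_apply, WithLp.ofLp_smul,
      Pi.smul_apply, smul_eq_mul, α, g]
    rw [Matrix.mulVec, dotProduct]
    exact Finset.sum_congr rfl fun c _ => mul_comm _ _
  have key : ∀ q, lam q ≠ 0 → (Real.sqrt (lam q) : ℂ) = ∑ c, g q c * f q c := by
    intro q hq
    have hs : (Real.sqrt (lam q) : ℂ) ≠ 0 := by
      exact_mod_cast (Real.sqrt_ne_zero (hlam q)).mpr hq
    have hss : (lam q : ℂ) = Real.sqrt (lam q) * Real.sqrt (lam q) := by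
      exact_mod_cast (Real.mul_self_sqrt (hlam q)).symm
    have h1 : inner ℂ (w q) (y q) = (Real.sqrt (lam q) : ℂ) := by
      simp only [w, inner_smul_left, hyy, if_true]
      rw [map_inv₀, Complex.conj_ofReal, hss]
      field_simp
    rw [← h1]
    conv_lhs => rw [hy q]
    simp [inner_sum, inner_smul_right, f]
  have hf : ∑ q ∈ J, ∑ c, ‖f q c‖ ^ 2 ≤ ∑ i, ∑ c, ‖A i c‖ ^ 2 := by
    rw [Finset.sum_comm]
    refine le_of_le_of_eq ?_ Finset.sum_comm
    refine Finset.sum_le_sum fun c _ => ?_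
    have h := hw.sum_inner_products_le (s := Finset.univ) (α c)
    rw [EuclideanSpace.norm_sq_eq] at h
    rw [← Finset.sum_coe_sort J (fun q => ‖f q c‖ ^ 2)]
    exact h
  have hg : ∑ q, ∑ c, ‖g q c‖ ^ 2 = ∑ c, ∑ j, ‖B c j‖ ^ 2 := by
    rw [Finset.sum_comm]
    refine Finset.sum_congr rfl fun c _ => ?_
    have h := u.sum_sq_norm_inner_left (WithLp.toLp 2 (fun j => star (B c j)))
    rw [EuclideanSpace.norm_sq_eq] at h
    simp only [norm_star] at h
    rw [← h]
    refine Finset.sum_congr rfl fun q _ => ?_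
    congr 2
    simp only [EuclideanSpace.inner_eq_star_dotProduct, g, mulVec]
    rw [dotProduct_comm]
    congr 1
    ext j
    simp
  have hsum : traceNorm X = ∑ q ∈ J, Real.sqrt (lam q) := by
    unfold traceNorm
    rw [Finset.sum_filter]
    refine Finset.sum_congr rfl fun q _ => ?_
    split_ifs with h
    · rfl
    · have : lam q = 0 := not_not.mp h
      change Real.sqrt (lam q) = 0
      simp [this]
  have hgJ : ∑ q ∈ J, ∑ c, ‖g q c‖ ^ 2 ≤ ∑ c, ∑ j, ‖B c j‖ ^ 2 := by
    rw [← hg]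
    exact Finset.sum_le_sum_of_subset_of_nonneg (Finset.subset_univ _)
      fun _ _ _ => Finset.sum_nonneg fun _ _ => by positivity
  rw [hsum]
  calc ∑ q ∈ J, Real.sqrt (lam q) ≤ ∑ q ∈ J, ∑ c, ‖f q c‖ * ‖g q c‖ := by
        refine Finset.sum_le_sum fun q hq => ?_
        have hq' : lam q ≠ 0 := by simpa [J] using hq
        have h : Real.sqrt (lam q) = ‖(Real.sqrt (lam q) : ℂ)‖ := by
          rw [Complex.norm_real, Real.norm_of_nonneg (Real.sqrt_nonneg _)]
        rw [h, key q hq']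
        refine (norm_sum_le _ _).trans (le_of_eq (Finset.sum_congr rfl fun c _ => ?_))
        rw [norm_mul, mul_comm]
    _ = ∑ z ∈ J ×ˢ Finset.univ, ‖f z.1 z.2‖ * ‖g z.1 z.2‖ := by rw [Finset.sum_product]
    _ ≤ Real.sqrt (∑ z ∈ J ×ˢ Finset.univ, ‖f z.1 z.2‖ ^ 2) *
        Real.sqrt (∑ z ∈ J ×ˢ Finset.univ, ‖g z.1 z.2‖ ^ 2) :=
        Real.sum_mul_le_sqrt_mul_sqrt _ _ _
    _ ≤ _ := by
        rw [Finset.sum_product, Finset.sum_product]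
        exact mul_le_mul (Real.sqrt_le_sqrt hf) (Real.sqrt_le_sqrt hgJ) (Real.sqrt_nonneg _)
          (Real.sqrt_nonneg _)

theorem sum_norm_kron {a b c d : Type*} [Fintype a] [Fintype b] [Fintype c] [Fintype d]
    (F : a → b → ℂ) (G : c → d → ℂ) :
    ∑ x : a × c, ∑ y : b × d, ‖F x.1 y.1 * star (G x.2 y.2)‖ ^ 2 =
      (∑ x, ∑ y, ‖F x y‖ ^ 2) * (∑ x, ∑ y, ‖G x y‖ ^ 2) := by
  simp only [norm_mul, norm_star, mul_pow, Fintype.sum_prod_type]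
  simp only [← Finset.mul_sum, ← Finset.sum_mul]

/-- if `ρ` is a density matrix with `SN(ρ) ≤ k`, then `‖L(ρ)‖_tr ≤ k`. -/
theorem traceNorm_realign_le {m n k : ℕ} (hk1 : 1 ≤ k) (hk : k ≤ min m n)
    (ρ : Matrix (Fin m × Fin n) (Fin m × Fin n) ℂ) (hρ : IsDensity ρ)
    (hSN : SchmidtNumLE k ρ) :
    traceNorm (realign ρ) ≤ k := by
  obtain ⟨N, p, v, hv, hp1, rfl⟩ := hSN
  choose d Q R hd hQR hQ hR using fun t => exists_factor (v t) (hv t).2.2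
  have hnorm : ∀ t, ∑ i, ∑ j, ‖v t (i, j)‖ ^ 2 = 1 := by
    intro t
    have h := (hv t).2.1
    simp only [vinner, dotProduct, Pi.star_apply] at h
    rw [← Fintype.sum_prod_type (f := fun x => ‖v t x‖ ^ 2)]
    have h2 : ((∑ x, ‖v t x‖ ^ 2 : ℝ) : ℂ) = 1 := by
      rw [← h]
      push_cast
      refine Finset.sum_congr rfl fun x _ => ?_
      exact (Complex.conj_mul' _).symm
    exact_mod_cast h2
  let A : Matrix (Fin m × Fin m) (Σ t, Fin (d t) × Fin (d t)) ℂ := fun x z =>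
    (Real.sqrt (p z.1) : ℂ) * (Q z.1 x.1 z.2.1 * star (Q z.1 x.2 z.2.2))
  let B : Matrix (Σ t, Fin (d t) × Fin (d t)) (Fin n × Fin n) ℂ := fun z y =>
    (Real.sqrt (p z.1) : ℂ) * (R z.1 z.2.1 y.1 * star (R z.1 z.2.2 y.2))
  have hAB : realign (∑ t, p t • ketBra (v t) (v t)) = A * B := by
    ext ⟨i, i'⟩ ⟨j, j'⟩
    rw [Matrix.mul_apply, Fintype.sum_sigma]
    simp only [realign, Matrix.sum_apply, Matrix.smul_apply, ketBra, vecMulVec_apply,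
      A, B, Pi.star_apply, hQR]
    refine Finset.sum_congr rfl fun t _ => ?_
    have hss : (p t : ℂ) = Real.sqrt (p t) * Real.sqrt (p t) := by
      exact_mod_cast (Real.mul_self_sqrt (hv t).1).symm
    rw [Complex.real_smul, hss, star_sum, Finset.sum_mul_sum, Fintype.sum_prod_type,
      Finset.mul_sum]
    refine Finset.sum_congr rfl fun s _ => ?_
    rw [Finset.mul_sum]
    refine Finset.sum_congr rfl fun s' _ => ?_
    rw [star_mul']
    ring
  have hsq : ∀ t, ‖(Real.sqrt (p t) : ℂ)‖ ^ 2 = p t := by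
    intro t
    rw [Complex.norm_real, Real.norm_of_nonneg (Real.sqrt_nonneg _), Real.sq_sqrt (hv t).1]
  have hA : ∑ x, ∑ z, ‖A x z‖ ^ 2 ≤ (k : ℝ) ^ 2 := by
    have h : ∑ x, ∑ z, ‖A x z‖ ^ 2 = ∑ t, p t * ((d t : ℝ) * d t) := by
      simp only [Fintype.sum_sigma]
      rw [Finset.sum_comm]
      refine Finset.sum_congr rfl fun t _ => ?_
      simp only [A, norm_mul _ (_ * _), mul_pow _ (‖_ * _‖), hsq, ← Finset.mul_sum]
      rw [sum_norm_kron (Q t) (Q t), hQ t]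
    rw [h]
    calc ∑ t, p t * ((d t : ℝ) * d t) ≤ ∑ t, p t * (k : ℝ) ^ 2 := by
          refine Finset.sum_le_sum fun t _ => mul_le_mul_of_nonneg_left ?_ (hv t).1
          have : (d t : ℝ) ≤ k := by exact_mod_cast hd t
          nlinarith [Nat.cast_nonneg (α := ℝ) (d t)]
      _ = (k : ℝ) ^ 2 := by rw [← Finset.sum_mul, hp1, one_mul]
  have hB : ∑ z, ∑ y, ‖B z y‖ ^ 2 ≤ 1 := by
    have h : ∑ z, ∑ y, ‖B z y‖ ^ 2 =
        ∑ t, p t * ((∑ s, ∑ j, ‖R t s j‖ ^ 2) * (∑ s, ∑ j, ‖R t s j‖ ^ 2)) := by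
      simp only [Fintype.sum_sigma]
      refine Finset.sum_congr rfl fun t _ => ?_
      simp only [B, norm_mul _ (_ * _), mul_pow _ (‖_ * _‖), hsq, ← Finset.mul_sum]
      rw [sum_norm_kron (R t) (R t)]
    rw [h, ← hp1]
    refine Finset.sum_le_sum fun t _ => mul_le_of_le_one_right (hv t).1 ?_
    have h1 := (hR t).trans_eq (hnorm t)
    have h0 : 0 ≤ ∑ s, ∑ j, ‖R t s j‖ ^ 2 := by positivity
    exact mul_le_one₀ h1 h0 h1
  refine (traceNorm_mul_le A B _ hAB).trans ?_
  calc _ ≤ (k : ℝ) * 1 := by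
        refine mul_le_mul ?_ ?_ (Real.sqrt_nonneg _) (Nat.cast_nonneg _)
        · exact Real.sqrt_le_iff.mpr ⟨Nat.cast_nonneg _, hA⟩
        · exact Real.sqrt_le_one.mpr hB
    _ = k := mul_one _

end Ent
end
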